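/- Let K ⊂ ℝ^d be compact, F : P_2(K) → ℝ bounded below, τ > 0, and let (μ_k^τ)_{k≥0} be a sequence such that for every k ≥ 0, μ_{k+1}^τ minimizes μ ↦ SW_2²(μ, μ_k^τ)/(2τ) + F(μ) over P_2(K). Define the piecewise constant interpolation μ^τ(0) = μ_0^τ and μ^τ(t) = μ_{k+1}^τ for t ∈ (kτ, (k+1)τ]. Then there exists a constant C ≥ 0, depending only on F(μ_0^τ) − inf F, such that for all 0 ≤ t < s, SW_2(μ^τ(t), μ^τ(s)) ≤ C(|t−s|^{1/2} + τ^{1/2}). -/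

import Mathlib

open MeasureTheory ENNReal Metric Filter
open scoped RealInnerProductSpace NNReal

noncomputable section

/-- `ℝ^d` as a Euclidean space. -/
abbrev Ed (d : ℕ) : Type := EuclideanSpace ℝ (Fin d)

/-- `π` is a coupling of `μ` and `ν`. -/
def IsCoupling {E : Type*} [MeasurableSpace E] (π : Measure (E × E)) (μ ν : Measure E) : Prop :=
  π.map Prod.fst = μ ∧ π.map Prod.snd = ν

/-- Squared 2-Wasserstein distance. -/
def W2sq {E : Type*} [MeasurableSpace E] [NormedAddCommGroup E] (μ ν : Measure E) : ℝ≥0∞ :=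
  ⨅ (π : Measure (E × E)) (_ : IsCoupling π μ ν), ∫⁻ p, (‖p.1 - p.2‖₊ : ℝ≥0∞) ^ 2 ∂π

/-- The uniform probability measure on the unit sphere `S^{d-1}`. -/
def unifSphere (d : ℕ) : Measure (sphere (0 : Ed d) 1) :=
  ((volume : Measure (Ed d)).toSphere Set.univ)⁻¹ • (volume : Measure (Ed d)).toSphere

/-- Projection `P^θ(x) = ⟨x, θ⟩`. -/
def proj {d : ℕ} (θ : Ed d) (x : Ed d) : ℝ := ⟪x, θ⟫

/-- Squared Sliced-Wasserstein distance. -/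
def SW2sq {d : ℕ} (μ ν : Measure (Ed d)) : ℝ≥0∞ :=
  ∫⁻ θ : sphere (0 : Ed d) 1,
    W2sq (μ.map (proj (θ : Ed d))) (ν.map (proj (θ : Ed d))) ∂(unifSphere d)

/-- Sliced-Wasserstein distance. -/
def SW2 {d : ℕ} (μ ν : Measure (Ed d)) : ℝ := Real.sqrt (SW2sq μ ν).toReal

/-- Finite second moment. -/
def FiniteSecondMoment {d : ℕ} (μ : Measure (Ed d)) : Prop :=
  ∫⁻ x, (‖x‖₊ : ℝ≥0∞) ^ 2 ∂μ < ∞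

/-- `μ ∈ P_2(K)`: probability measure supported in `K` with finite second moment. -/
def MemP2 {d : ℕ} (K : Set (Ed d)) (μ : Measure (Ed d)) : Prop :=
  IsProbabilityMeasure μ ∧ μ Kᶜ = 0 ∧ FiniteSecondMoment μ

/-- Piecewise constant interpolation of the SW-JKO scheme:
`μ^τ(0) = μ_0` and `μ^τ(t) = μ_{k+1}` for `t ∈ (kτ, (k+1)τ]`. -/
def pwConst {d : ℕ} (μseq : ℕ → Measure (Ed d)) (τ : ℝ) (t : ℝ) : Measure (Ed d) :=
  μseq ⌈t / τ⌉₊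

open ProbabilityTheory in
lemma glue_aux (μ ν ρ : Measure ℝ) [IsProbabilityMeasure μ] [IsProbabilityMeasure ν]
    (π₁ π₂ : Measure (ℝ × ℝ)) (h₁ : IsCoupling π₁ μ ν) (h₂ : IsCoupling π₂ ν ρ) :
    ∃ γ : Measure ((ℝ × ℝ) × ℝ), γ.map Prod.fst = π₁ ∧
      γ.map (fun p => (p.1.2, p.2)) = π₂ := by
  have i1 : IsProbabilityMeasure π₁ := by
    constructor
    have := congrArg (fun m => m Set.univ) h₁.1
    simpa [Measure.map_apply measurable_fst] using this
  have i2 : IsProbabilityMeasure π₂ := by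
    constructor
    have := congrArg (fun m => m Set.univ) h₂.1
    simpa [Measure.map_apply measurable_fst] using this
  refine ⟨Measure.compProd π₁ (π₂.condKernel.comap Prod.snd measurable_snd), ?_, ?_⟩
  · exact Measure.fst_compProd _ _
  · refine Measure.ext_of_lintegral _ fun f hf => ?_
    have e : π₂.fst = π₁.snd := h₂.1.trans h₁.2.symm
    rw [lintegral_map hf (by fun_prop), Measure.lintegral_compProd (by fun_prop)]
    conv_rhs => rw [← π₂.disintegrate π₂.condKernel, Measure.lintegral_compProd hf, e,
      Measure.snd, lintegral_map (Measurable.lintegral_kernel_prod_right' hf) measurable_snd]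
    rfl

def w2 (μ ν : Measure ℝ) : ℝ≥0∞ := (W2sq μ ν) ^ ((1 : ℝ) / 2)

lemma w2_le (μ ν : Measure ℝ) (π : Measure (ℝ × ℝ)) (h : IsCoupling π μ ν) :
    w2 μ ν ≤ (∫⁻ p, (‖p.1 - p.2‖₊ : ℝ≥0∞) ^ (2 : ℝ) ∂π) ^ ((1 : ℝ) / 2) := by
  unfold w2
  gcongr
  simp only [ENNReal.rpow_ofNat]
  exact iInf₂_le π h

lemma lt_w2 (μ ν : Measure ℝ) (c : ℝ≥0∞) (h : w2 μ ν < c) :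
    ∃ π, IsCoupling π μ ν ∧
      (∫⁻ p, (‖p.1 - p.2‖₊ : ℝ≥0∞) ^ (2 : ℝ) ∂π) ^ ((1 : ℝ) / 2) < c := by
  unfold w2 at h
  have h2 : W2sq μ ν < c ^ (2 : ℝ) := by
    have := ENNReal.rpow_lt_rpow h (z := 2) (by norm_num)
    rwa [← ENNReal.rpow_mul, one_div, inv_mul_cancel₀ (by norm_num), ENNReal.rpow_one] at this
  unfold W2sq at h2
  simp only [iInf_lt_iff] at h2
  obtain ⟨π, hπ, h3⟩ := h2
  refine ⟨π, hπ, ?_⟩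
  simp only [ENNReal.rpow_ofNat] at h3 ⊢
  have := ENNReal.rpow_lt_rpow h3 (z := 1 / 2) (by norm_num)
  rwa [← ENNReal.rpow_natCast c 2, ← ENNReal.rpow_mul, Nat.cast_ofNat, mul_one_div_cancel (by norm_num),
    ENNReal.rpow_one] at this

lemma w2_triangle (μ ν ρ : Measure ℝ) [IsProbabilityMeasure μ] [IsProbabilityMeasure ν] :
    w2 μ ρ ≤ w2 μ ν + w2 ν ρ := by
  refine ENNReal.le_of_forall_pos_le_add fun ε hε hfin => ?_
  rw [ENNReal.add_lt_top] at hfin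
  have hε2 : ((ε / 2 : ℝ≥0) : ℝ≥0∞) ≠ 0 := by
    rw [ENNReal.coe_ne_zero]; positivity
  obtain ⟨π₁, h₁, l₁⟩ := lt_w2 μ ν _ (ENNReal.lt_add_right hfin.1.ne hε2)
  obtain ⟨π₂, h₂, l₂⟩ := lt_w2 ν ρ _ (ENNReal.lt_add_right hfin.2.ne hε2)
  obtain ⟨γ, g₁, g₂⟩ := glue_aux μ ν ρ π₁ π₂ h₁ h₂
  have hc : IsCoupling (γ.map (fun p => (p.1.1, p.2))) μ ρ := by
    constructor
    · rw [Measure.map_map (by fun_prop) (by fun_prop), ← h₁.1, ← g₁,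
        Measure.map_map (by fun_prop) (by fun_prop)]
      rfl
    · rw [Measure.map_map (by fun_prop) (by fun_prop), ← h₂.2, ← g₂,
        Measure.map_map (by fun_prop) (by fun_prop)]
      rfl
  have key := w2_le _ _ _ hc
  rw [← g₁, lintegral_map (by fun_prop) (by fun_prop)] at l₁
  rw [← g₂, lintegral_map (by fun_prop) (by fun_prop)] at l₂
  rw [lintegral_map (by fun_prop) (by fun_prop)] at key
  have mink := ENNReal.lintegral_Lp_add_le (μ := γ) (p := 2)
    (f := fun p => (‖p.1.1 - p.1.2‖₊ : ℝ≥0∞)) (g := fun p => (‖p.1.2 - p.2‖₊ : ℝ≥0∞))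
    (by fun_prop) (by fun_prop) (by norm_num)
  have e : ((ε / 2 : ℝ≥0) : ℝ≥0∞) + ((ε / 2 : ℝ≥0) : ℝ≥0∞) = ε := by
    rw [← ENNReal.coe_add, add_halves]
  calc w2 μ ρ ≤ _ := key
    _ ≤ _ := by
      refine ENNReal.rpow_le_rpow (lintegral_mono fun p => ?_) (by norm_num)
      refine ENNReal.rpow_le_rpow (z := 2) ?_ (by norm_num)
      change _ ≤ (‖p.1.1 - p.1.2‖₊ : ℝ≥0∞) + (‖p.1.2 - p.2‖₊ : ℝ≥0∞)
      rw [← ENNReal.coe_add, ENNReal.coe_le_coe]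
      exact (by simpa using nnnorm_add_le (p.1.1 - p.1.2) (p.1.2 - p.2))
    _ ≤ _ := mink
    _ ≤ (w2 μ ν + ((ε / 2 : ℝ≥0) : ℝ≥0∞)) + (w2 ν ρ + ((ε / 2 : ℝ≥0) : ℝ≥0∞)) :=
      add_le_add l₁.le l₂.le
    _ = _ := by rw [add_add_add_comm, e]

lemma w2sq_symm_le (μ ν : Measure ℝ) : W2sq μ ν ≤ W2sq ν μ := by
  refine le_iInf₂ fun π h => ?_
  have hc : IsCoupling (π.map Prod.swap) μ ν := by
    constructor
    · rw [Measure.map_map (by fun_prop) (by fun_prop), ← h.2]; rfl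
    · rw [Measure.map_map (by fun_prop) (by fun_prop), ← h.1]; rfl
  refine (iInf₂_le (π.map Prod.swap) hc).trans ?_
  rw [lintegral_map (by fun_prop) (by fun_prop)]
  refine lintegral_mono fun p => ?_
  simp only [Prod.fst_swap, Prod.snd_swap]
  rw [← neg_sub, nnnorm_neg]

lemma w2sq_symm (μ ν : Measure ℝ) : W2sq μ ν = W2sq ν μ :=
  le_antisymm (w2sq_symm_le _ _) (w2sq_symm_le _ _)

lemma w2_symm (μ ν : Measure ℝ) : w2 μ ν = w2 ν μ := by rw [w2, w2, w2sq_symm]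

lemma w2_self (μ : Measure ℝ) : W2sq μ μ = 0 := by
  have hc : IsCoupling (μ.map (fun x => (x, x))) μ μ := by
    constructor
    · rw [Measure.map_map (by fun_prop) (by fun_prop)]; exact Measure.map_id
    · rw [Measure.map_map (by fun_prop) (by fun_prop)]; exact Measure.map_id
  refine le_antisymm ((iInf₂_le (μ.map (fun x => (x, x))) hc).trans ?_) zero_le
  rw [lintegral_map (by fun_prop) (by fun_prop)]
  simp

lemma measurable_proj' {d : ℕ} (θ : Ed d) : Measurable (proj θ) := by
  unfold proj; fun_prop

instance proj_prob {d : ℕ} (θ : Ed d) (μ : Measure (Ed d)) [IsProbabilityMeasure μ] :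
    IsProbabilityMeasure (μ.map (proj θ)) :=
  Measure.isProbabilityMeasure_map (measurable_proj' θ).aemeasurable

def mom {d : ℕ} (μ : Measure (Ed d)) : ℝ≥0∞ :=
  (∫⁻ x, (‖x‖₊ : ℝ≥0∞) ^ (2 : ℝ) ∂μ) ^ ((1 : ℝ) / 2)

lemma mom_ne_top {d : ℕ} (μ : Measure (Ed d)) (h : FiniteSecondMoment μ) : mom μ ≠ ⊤ := by
  unfold mom
  unfold FiniteSecondMoment at h
  refine ENNReal.rpow_ne_top_of_nonneg (by norm_num) ?_
  simpa using h.ne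

lemma w2_proj {d : ℕ} (μ : Measure (Ed d)) (θ θ' : Ed d) :
    w2 (μ.map (proj θ)) (μ.map (proj θ')) ≤ mom μ * edist θ θ' := by
  have m1 := measurable_proj' θ
  have m2 := measurable_proj' θ'
  refine (w2_le _ _ (μ.map (fun x => (proj θ x, proj θ' x))) ⟨?_, ?_⟩).trans ?_
  · rw [Measure.map_map (by fun_prop) (by fun_prop)]; rfl
  · rw [Measure.map_map (by fun_prop) (by fun_prop)]; rfl
  · rw [lintegral_map (by fun_prop) (by fun_prop)]
    have : edist θ θ' = ((edist θ θ') ^ (2 : ℝ)) ^ ((1 : ℝ) / 2) := by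
      rw [← ENNReal.rpow_mul]; simp
    rw [this, mom, ← ENNReal.mul_rpow_of_nonneg _ _ (by norm_num),
      ← lintegral_mul_const _ (by fun_prop)]
    refine ENNReal.rpow_le_rpow (lintegral_mono fun x => ?_) (by norm_num)
    change _ ≤ (‖x‖₊ : ℝ≥0∞) ^ (2 : ℝ) * edist θ θ' ^ (2 : ℝ)
    rw [← ENNReal.mul_rpow_of_nonneg _ _ (by norm_num)]
    refine ENNReal.rpow_le_rpow ?_ (by norm_num)
    rw [edist_eq_enorm_sub, enorm_eq_nnnorm, ← ENNReal.coe_mul, ENNReal.coe_le_coe]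
    simp only [proj]
    rw [← inner_sub_right]
    exact nnnorm_inner_le_nnnorm x (θ - θ')

lemma w2_lip {d : ℕ} (μ ν : Measure (Ed d)) [IsProbabilityMeasure μ] [IsProbabilityMeasure ν]
    (θ θ' : Ed d) :
    w2 (μ.map (proj θ)) (ν.map (proj θ)) ≤
      w2 (μ.map (proj θ')) (ν.map (proj θ')) + (mom μ + mom ν) * edist θ θ' := by
  calc _ ≤ w2 (μ.map (proj θ)) (μ.map (proj θ')) + w2 (μ.map (proj θ')) (ν.map (proj θ)) :=
        w2_triangle _ _ _
    _ ≤ w2 (μ.map (proj θ)) (μ.map (proj θ')) + (w2 (μ.map (proj θ')) (ν.map (proj θ')) +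
          w2 (ν.map (proj θ')) (ν.map (proj θ))) := by
        gcongr; exact w2_triangle _ _ _
    _ ≤ mom μ * edist θ θ' + (w2 (μ.map (proj θ')) (ν.map (proj θ')) +
          mom ν * edist θ θ') := by
        gcongr
        · exact w2_proj _ _ _
        · rw [w2_symm]; exact w2_proj _ _ _
    _ = _ := by ring

lemma w2_cont {d : ℕ} (μ ν : Measure (Ed d)) [IsProbabilityMeasure μ] [IsProbabilityMeasure ν]
    (hμ : FiniteSecondMoment μ) (hν : FiniteSecondMoment ν) :
    Continuous fun θ : Ed d => w2 (μ.map (proj θ)) (ν.map (proj θ)) :=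
  continuous_of_le_add_edist (mom μ + mom ν)
    (ENNReal.add_ne_top.2 ⟨mom_ne_top _ hμ, mom_ne_top _ hν⟩) (w2_lip μ ν)

lemma w2_bound {d : ℕ} (μ ν : Measure (Ed d)) [IsProbabilityMeasure μ] [IsProbabilityMeasure ν]
    (θ : sphere (0 : Ed d) 1) :
    w2 (μ.map (proj (θ : Ed d))) (ν.map (proj (θ : Ed d))) ≤ mom μ + mom ν := by
  refine (w2_lip μ ν θ 0).trans ?_
  have h0 : proj (0 : Ed d) = fun _ => (0 : ℝ) := by ext x; simp [proj]
  have h1 : edist (θ : Ed d) 0 = 1 := by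
    rw [edist_dist, mem_sphere.1 θ.2]; simp
  rw [h0, h1, Measure.map_const, Measure.map_const, measure_univ, measure_univ, w2, w2_self]
  simp

lemma w2_rpow (μ ν : Measure ℝ) : W2sq μ ν = w2 μ ν ^ (2 : ℝ) := by
  rw [w2, ← ENNReal.rpow_mul]; simp

lemma unif_le {d : ℕ} : unifSphere d Set.univ ≤ 1 := by
  simp only [unifSphere, Measure.smul_apply, smul_eq_mul]
  exact ENNReal.inv_mul_le_one _

lemma sw_ne_top {d : ℕ} (μ ν : Measure (Ed d)) [IsProbabilityMeasure μ] [IsProbabilityMeasure ν]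
    (hμ : FiniteSecondMoment μ) (hν : FiniteSecondMoment ν) : SW2sq μ ν ≠ ⊤ := by
  have h : SW2sq μ ν ≤ (mom μ + mom ν) ^ (2 : ℝ) * unifSphere d Set.univ := by
    rw [← lintegral_const]
    refine lintegral_mono fun θ => ?_
    rw [w2_rpow]
    exact ENNReal.rpow_le_rpow (w2_bound μ ν θ) (by norm_num)
  refine ne_top_of_le_ne_top (ENNReal.mul_ne_top ?_ ?_) h
  · exact ENNReal.rpow_ne_top_of_nonneg (by norm_num)
      (ENNReal.add_ne_top.2 ⟨mom_ne_top _ hμ, mom_ne_top _ hν⟩)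
  · exact ne_top_of_le_ne_top ENNReal.one_ne_top unif_le

lemma SW2_eq {d : ℕ} (μ ν : Measure (Ed d)) :
    SW2 μ ν = ((∫⁻ θ : sphere (0 : Ed d) 1,
      w2 (μ.map (proj (θ : Ed d))) (ν.map (proj (θ : Ed d))) ^ (2 : ℝ) ∂(unifSphere d)) ^
        ((1 : ℝ) / 2)).toReal := by
  rw [SW2, SW2sq, Real.sqrt_eq_rpow, ENNReal.toReal_rpow]
  simp only [w2_rpow]

lemma SW2_triangle {d : ℕ} (μ ν ρ : Measure (Ed d)) [IsProbabilityMeasure μ]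
    [IsProbabilityMeasure ν] [IsProbabilityMeasure ρ]
    (hμ : FiniteSecondMoment μ) (hν : FiniteSecondMoment ν) (hρ : FiniteSecondMoment ρ) :
    SW2 μ ρ ≤ SW2 μ ν + SW2 ν ρ := by
  have t1 := sw_ne_top μ ν hμ hν
  have t2 := sw_ne_top ν ρ hν hρ
  simp only [SW2sq, w2_rpow] at t1 t2
  have t1' := ENNReal.rpow_ne_top_of_nonneg (y := 1 / 2) (by norm_num) t1
  have t2' := ENNReal.rpow_ne_top_of_nonneg (y := 1 / 2) (by norm_num) t2
  simp only [SW2_eq]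
  rw [← ENNReal.toReal_add t1' t2']
  refine ENNReal.toReal_mono (ENNReal.add_ne_top.2 ⟨t1', t2'⟩) ?_
  refine le_trans ?_ (ENNReal.lintegral_Lp_add_le
    ((w2_cont μ ν hμ hν).comp continuous_subtype_val).measurable.aemeasurable
    ((w2_cont ν ρ hν hρ).comp continuous_subtype_val).measurable.aemeasurable (by norm_num))
  refine ENNReal.rpow_le_rpow (lintegral_mono fun x => ?_) (by norm_num)
  exact ENNReal.rpow_le_rpow (w2_triangle _ _ _) (by norm_num)

lemma SW2_self {d : ℕ} (μ : Measure (Ed d)) : SW2sq μ μ = 0 := by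
  simp [SW2sq, w2_self]

lemma SW2sq_symm {d : ℕ} (μ ν : Measure (Ed d)) : SW2sq μ ν = SW2sq ν μ := by
  simp only [SW2sq, w2sq_symm]

lemma SW2_chain {d : ℕ} (K : Set (Ed d)) (u : ℕ → Measure (Ed d)) (h : ∀ k, MemP2 K (u k))
    (n j : ℕ) : SW2 (u n) (u (n + j)) ≤ ∑ i ∈ Finset.range j, SW2 (u (n + i)) (u (n + i + 1)) := by
  induction j with
  | zero => simp [SW2, SW2_self]
  | succ j ih =>
    rw [Finset.sum_range_succ]
    have i1 := (h n).1
    have i2 := (h (n + j)).1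
    have i3 := (h (n + j + 1)).1
    have := SW2_triangle (u n) (u (n + j)) (u (n + j + 1)) (h _).2.2 (h _).2.2 (h _).2.2
    rw [← add_assoc]
    linarith

/-- There is a constant C ≥ 0, depending only on F(μ_0) - inf F, such that the
piecewise constant interpolation of the SW-JKO scheme satisfies
SW_2(μ^τ(t), μ^τ(s)) ≤ C (|t-s|^{1/2} + τ^{1/2}) for all 0 ≤ t < s. -/
theorem swjko_interpolation_equicontinuity :
    ∃ C : ℝ → ℝ,
      ∀ (d : ℕ) (K : Set (Ed d)), IsCompact K →
      ∀ F : Measure (Ed d) → ℝ, BddBelow (F '' {μ : Measure (Ed d) | MemP2 K μ}) →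
      ∀ τ : ℝ, 0 < τ →
      ∀ μseq : ℕ → Measure (Ed d), (∀ k, MemP2 K (μseq k)) →
      (∀ k, ∀ ν : Measure (Ed d), MemP2 K ν →
        (SW2sq (μseq (k + 1)) (μseq k)).toReal / (2 * τ) + F (μseq (k + 1)) ≤
          (SW2sq ν (μseq k)).toReal / (2 * τ) + F ν) →
      0 ≤ C (F (μseq 0) - sInf (F '' {μ : Measure (Ed d) | MemP2 K μ})) ∧
      ∀ t s : ℝ, 0 ≤ t → t < s →
        SW2 (pwConst μseq τ t) (pwConst μseq τ s) ≤
          C (F (μseq 0) - sInf (F '' {μ : Measure (Ed d) | MemP2 K μ})) *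
            (|t - s| ^ ((1 : ℝ) / 2) + τ ^ ((1 : ℝ) / 2)) := by
  refine ⟨fun D => Real.sqrt (2 * D), ?_⟩
  intro d K _ F hF τ hτ u hu hmin
  refine ⟨Real.sqrt_nonneg _, ?_⟩
  intro t s ht hts
  set I := sInf (F '' {μ : Measure (Ed d) | MemP2 K μ}) with hI
  have hinf : ∀ k, I ≤ F (u k) := fun k => csInf_le hF ⟨_, hu k, rfl⟩
  have step : ∀ k, SW2 (u k) (u (k + 1)) ^ 2 ≤ 2 * τ * (F (u k) - F (u (k + 1))) := by
    intro k
    have h := hmin k (u k) (hu k)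
    rw [SW2_self, ENNReal.toReal_zero, zero_div, zero_add, SW2sq_symm] at h
    rw [SW2, Real.sq_sqrt ENNReal.toReal_nonneg]
    have h2 : (SW2sq (u k) (u (k + 1))).toReal / (2 * τ) ≤ F (u k) - F (u (k + 1)) := by linarith
    rw [div_le_iff₀ (by positivity)] at h2
    linarith
  have dec : ∀ k, F (u (k + 1)) ≤ F (u k) := by
    intro k
    have h1 := (sq_nonneg _).trans (step k)
    have := nonneg_of_mul_nonneg_right h1 (by positivity)
    linarith
  have dec0 : ∀ k, F (u k) ≤ F (u 0) := fun k => antitone_nat_of_succ_le (f := fun k => F (u k)) dec (Nat.zero_le k)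
  unfold pwConst
  have hle : ⌈t / τ⌉₊ ≤ ⌈s / τ⌉₊ := Nat.ceil_mono (by gcongr)
  obtain ⟨j, hj⟩ := Nat.exists_eq_add_of_le hle
  have hjb : (j : ℝ) * τ ≤ (s - t) + τ := by
    have h1 := Nat.ceil_lt_add_one (a := s / τ) (by have := ht.trans hts.le; positivity)
    have h2 := Nat.le_ceil (t / τ)
    rw [hj] at h1
    push_cast at h1
    have h3 : (j : ℝ) ≤ (s - t) / τ + 1 := by rw [sub_div]; linarith
    calc (j : ℝ) * τ ≤ ((s - t) / τ + 1) * τ := by gcongr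
      _ = _ := by field_simp
  rw [hj]
  generalize ⌈t / τ⌉₊ = n
  have chain := SW2_chain K u hu n j
  have cs := sq_sum_le_card_mul_sum_sq (s := Finset.range j)
    (f := fun i => SW2 (u (n + i)) (u (n + i + 1)))
  have sum_le : ∑ i ∈ Finset.range j, SW2 (u (n + i)) (u (n + i + 1)) ^ 2 ≤
      2 * τ * (F (u 0) - I) := by
    calc _ ≤ ∑ i ∈ Finset.range j, 2 * τ * (F (u (n + i)) - F (u (n + (i + 1)))) :=
          Finset.sum_le_sum fun i _ => step (n + i)
      _ = 2 * τ * (F (u n) - F (u (n + j))) := by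
          rw [← Finset.mul_sum, Finset.sum_range_sub' (fun i => F (u (n + i)))]; simp
      _ ≤ _ := by
          have := dec0 n; have := hinf (n + j)
          gcongr
  have hD : 0 ≤ F (u 0) - I := by linarith [hinf 0]
  have n0 : 0 ≤ SW2 (u n) (u (n + j)) := Real.sqrt_nonneg _
  rw [Finset.card_range] at cs
  have sq : SW2 (u n) (u (n + j)) ^ 2 ≤ 2 * (F (u 0) - I) * ((s - t) + τ) := by
    calc _ ≤ _ := pow_le_pow_left₀ n0 chain 2
      _ ≤ _ := cs
      _ ≤ (j : ℝ) * (2 * τ * (F (u 0) - I)) := by gcongr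
      _ = 2 * (F (u 0) - I) * (j * τ) := by ring
      _ ≤ _ := by gcongr
  rw [← Real.sqrt_eq_rpow, ← Real.sqrt_eq_rpow, abs_sub_comm, abs_of_pos (sub_pos.2 hts)]
  calc SW2 (u n) (u (n + j)) ≤ √(2 * (F (u 0) - I) * ((s - t) + τ)) := Real.le_sqrt_of_sq_le sq
    _ = √(2 * (F (u 0) - I)) * √((s - t) + τ) := Real.sqrt_mul (by positivity) _
    _ ≤ _ := by
      gcongr
      have hst : 0 ≤ s - t := by linarith
      rw [Real.sqrt_le_left (by positivity)]
      have e1 := Real.sq_sqrt hst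
      have e2 := Real.sq_sqrt hτ.le
      nlinarith [mul_nonneg (Real.sqrt_nonneg (s - t)) (Real.sqrt_nonneg τ)]
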